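/- Assume the Continuum Hypothesis. Let X be a productively quasi-Lindelöf topological space. Then every cover of X^ω of size 𝔠 consisting of basic open sets has a countable subcover. -/

import Mathlib

open Set Cardinal Topology

universe u v

/-- A space is quasi-Lindelöf if every open cover has a countable subcover
(no separation axioms assumed). -/
def QuasiLindelofSp (X : Type u) [TopologicalSpace X] : Prop :=
  ∀ 𝒰 : Set (Set X), (∀ U ∈ 𝒰, IsOpen U) → ⋃₀ 𝒰 = Set.univ →
    ∃ 𝒱 ⊆ 𝒰, 𝒱.Countable ∧ ⋃₀ 𝒱 = Set.univ

/-- Lindelöf in the sense of Engelking: regular (T3, including T1) and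
every open cover has a countable subcover. -/
def EngLindelofSp (X : Type u) [TopologicalSpace X] : Prop :=
  RegularSpace X ∧ T1Space X ∧ QuasiLindelofSp X

/-- X is productively Lindelöf if X × Y is Lindelöf for every Lindelöf space Y. -/
def ProductivelyLindelofSp (X : Type u) [TopologicalSpace X] : Prop :=
  ∀ (Y : Type u) [TopologicalSpace Y], EngLindelofSp Y → EngLindelofSp (X × Y)

/-- X is productively quasi-Lindelöf if X × Y is quasi-Lindelöf for every Lindelöf space Y. -/
def ProductivelyQuasiLindelofSp (X : Type u) [TopologicalSpace X] : Prop :=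
  ∀ (Y : Type u) [TopologicalSpace Y], EngLindelofSp Y → QuasiLindelofSp (X × Y)

/-- X is powerfully Lindelöf if X^ω is Lindelöf. -/
def PowerfullyLindelofSp (X : Type u) [TopologicalSpace X] : Prop :=
  EngLindelofSp (ℕ → X)

/-- X is powerfully quasi-Lindelöf if X^ω is quasi-Lindelöf. -/
def PowerfullyQuasiLindelofSp (X : Type u) [TopologicalSpace X] : Prop :=
  QuasiLindelofSp (ℕ → X)

/-- Tightness of X is at most κ. -/
def TightnessLE (X : Type u) [TopologicalSpace X] (κ : Cardinal.{u}) : Prop :=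
  ∀ (A : Set X) (x : X), x ∈ closure A → ∃ B ⊆ A, #B ≤ κ ∧ x ∈ closure B

/-- X has countable tightness. -/
def CountableTightness (X : Type u) [TopologicalSpace X] : Prop :=
  ∀ (A : Set X) (x : X), x ∈ closure A → ∃ B ⊆ A, B.Countable ∧ x ∈ closure B

/-- The Lindelöf number of X is at most κ: every open cover has a subcover of size ≤ κ. -/
def LindelofNumberLE (X : Type u) [TopologicalSpace X] (κ : Cardinal.{u}) : Prop :=
  ∀ 𝒰 : Set (Set X), (∀ U ∈ 𝒰, IsOpen U) → ⋃₀ 𝒰 = Set.univ →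
    ∃ 𝒱 ⊆ 𝒰, #𝒱 ≤ κ ∧ ⋃₀ 𝒱 = Set.univ

/-- The weight of X is at most κ: there is a base of size ≤ κ. -/
def WeightLE (X : Type u) [TopologicalSpace X] (κ : Cardinal.{u}) : Prop :=
  ∃ B : Set (Set X), TopologicalSpace.IsTopologicalBasis B ∧ #B ≤ κ

/-- N is a network for X. -/
def IsNetwork (X : Type u) [TopologicalSpace X] (N : Set (Set X)) : Prop :=
  ∀ (x : X) (U : Set X), IsOpen U → x ∈ U → ∃ n ∈ N, x ∈ n ∧ n ⊆ U

/-- X is linearly Lindelöf: regular (incl. T1) and every open cover linearly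
ordered by inclusion has a countable subcover. -/
def LinearlyLindelofSp (X : Type u) [TopologicalSpace X] : Prop :=
  RegularSpace X ∧ T1Space X ∧
    ∀ 𝒰 : Set (Set X), (∀ U ∈ 𝒰, IsOpen U) → IsChain (· ⊆ ·) 𝒰 → ⋃₀ 𝒰 = Set.univ →
      ∃ 𝒱 ⊆ 𝒰, 𝒱.Countable ∧ ⋃₀ 𝒱 = Set.univ

/-- U ⊆ X^ω is a basic open set: a product of open sets, all but finitely many of
which equal X. -/
def IsBasicOpen (X : Type u) [TopologicalSpace X] (U : Set (ℕ → X)) : Prop :=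
  ∃ V : ℕ → Set X, (∀ i, IsOpen (V i)) ∧ {i | V i ≠ Set.univ}.Finite ∧
    U = Set.pi Set.univ V

/-- A family of subsets of Z is point-κ if every point belongs to at most κ members. -/
def PointLE {Z : Type u} (𝒲 : Set (Set Z)) (κ : Cardinal.{u}) : Prop :=
  ∀ z : Z, #({W ∈ 𝒲 | z ∈ W}) ≤ κ

/-- A non-empty space is zero-dimensional if it is T1 and has a base of clopen sets. -/
def ZeroDimensionalSp (Y : Type u) [TopologicalSpace Y] : Prop :=
  Nonempty Y ∧ T1Space Y ∧
    ∃ B : Set (Set Y), TopologicalSpace.IsTopologicalBasis B ∧ ∀ b ∈ B, IsClopen b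

/-!
An open family `B` indexed by `ω₁` turns `X` into the subset `upperHull B` of `2^ω₁`, the projection
of a closed subset of `X × 2^ω₁`; it is again productively quasi-Lindelöf, and covers of `X^ω` by
basic open sets built from `B` correspond to open covers of `(upperHull B)^ω`.

If `ℵ₁` many sets cover a productively quasi-Lindelöf subspace `Z` of a regular space without a
countable subcover, choose for each of them a point of `Z` outside the earlier ones. Isolating these
points gives a Michael-line-type space; when it is Lindelöf, its product with `Z` is not.
Under CH this shows first that `Z` is `σ`-compact when the ambient space is compact metrizable, and
then, through the projections of `Z ⊆ 2^ω₁` to countably many coordinates, that `Z` has the Alster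
property. A set with the Alster property has Lindelöf countable power: given a filter on the power,
one picks compact sets `C n` one coordinate at a time so that no `Gδ` cylinder around their product
is avoided by the filter, and then the filter clusters in that product.
-/

open scoped Filter Ordinal

theorem quasiLindelofSp_iff {X : Type u} [TopologicalSpace X] :
    QuasiLindelofSp X ↔ LindelofSpace X := by
  refine ⟨fun h => ⟨isLindelof_of_countable_subcover fun {ι} U hU hcov => ?_⟩,
    fun _ 𝒰 hU hcov => ?_⟩
  · obtain ⟨𝒱, h𝒱, hc, hV⟩ := h (range U) (forall_mem_range.2 hU)
      (sUnion_range U ▸ univ_subset_iff.1 hcov)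
    have := hc.to_subtype
    choose t ht using h𝒱
    refine ⟨range fun V : 𝒱 => t V.2, countable_range _,
      hV.ge.trans (sUnion_subset fun V hVV => ?_)⟩
    exact (ht hVV).ge.trans (subset_biUnion_of_mem (mem_range_self (⟨V, hVV⟩ : 𝒱)))
  · rw [sUnion_eq_iUnion] at hcov
    obtain ⟨t, ht, hV⟩ := isLindelof_univ.elim_countable_subcover _
      (fun U : 𝒰 => hU U U.2) hcov.ge
    exact ⟨(↑) '' t, Subtype.coe_image_subset _ _, ht.image _,
      by rw [sUnion_image]; exact univ_subset_iff.1 hV⟩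

theorem isLindelof_preimage_of_isProperMap {X : Type*} {Y : Type*} [TopologicalSpace X]
    [TopologicalSpace Y] {f : X → Y} {s : Set Y} (hs : IsLindelof s) (hf : IsProperMap f) :
    IsLindelof (f ⁻¹' s) := by
  intro l _ _ hl
  obtain ⟨y, hy, hly⟩ := hs (Filter.map_le_iff_le_comap.2 (hl.trans Filter.comap_principal.ge))
  obtain ⟨x, rfl, hx⟩ := hf.clusterPt_of_mapClusterPt hly
  exact ⟨x, hy, hx⟩

theorem lindelofSpace_prod_of_compactSpace {K Y : Type*} [TopologicalSpace K]
    [TopologicalSpace Y] [CompactSpace K] [LindelofSpace Y] : LindelofSpace (K × Y) :=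
  ⟨isLindelof_preimage_of_isProperMap isLindelof_univ
    (isProperMap_snd_of_compactSpace (X := K) (Y := Y))⟩

namespace ProductivelyQuasiLindelofSp

variable {X : Type u} [TopologicalSpace X]

theorem lindelofSpace_prod (hX : ProductivelyQuasiLindelofSp X) (Y : Type u) [TopologicalSpace Y]
    [RegularSpace Y] [T1Space Y] [LindelofSpace Y] : LindelofSpace (X × Y) :=
  quasiLindelofSp_iff.1 (hX Y ⟨‹_›, ‹_›, quasiLindelofSp_iff.2 ‹_›⟩)

theorem of_forall_lindelofSpace_prod
    (h : ∀ (Y : Type u) [TopologicalSpace Y] [RegularSpace Y] [T1Space Y] [LindelofSpace Y],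
      LindelofSpace (X × Y)) : ProductivelyQuasiLindelofSp X := by
  rintro Y _ ⟨_, _, hY⟩
  have := quasiLindelofSp_iff.1 hY
  exact quasiLindelofSp_iff.2 (h Y)

theorem lindelofSpace (hX : ProductivelyQuasiLindelofSp X) : LindelofSpace X :=
  have := hX.lindelofSpace_prod PUnit
  .of_continuous_surjective (f := (Prod.fst : X × PUnit → X)) continuous_fst Prod.fst_surjective

theorem of_continuous_surjective {Z : Type u} [TopologicalSpace Z]
    (hX : ProductivelyQuasiLindelofSp X) {f : X → Z} (hf : Continuous f)
    (hsurj : Function.Surjective f) : ProductivelyQuasiLindelofSp Z :=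
  of_forall_lindelofSpace_prod fun Y _ _ _ _ =>
    have := hX.lindelofSpace_prod Y
    .of_continuous_surjective (hf.prodMap (continuous_id (X := Y)))
      (hsurj.prodMap Function.surjective_id)

theorem image {Y : Type u} [TopologicalSpace Y] {Z : Set X} (hZ : ProductivelyQuasiLindelofSp Z)
    {f : X → Y} (hf : ContinuousOn f Z) : ProductivelyQuasiLindelofSp (f '' Z) :=
  hZ.of_continuous_surjective (hf.mapsToRestrict (mapsTo_image f Z))
    (surjective_mapsTo_image_restrict f Z)

theorem subtype_of_isClosed {Z : Set X} (hX : ProductivelyQuasiLindelofSp X) (hZ : IsClosed Z) :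
    ProductivelyQuasiLindelofSp Z :=
  of_forall_lindelofSpace_prod fun Y _ _ _ _ =>
    have := hX.lindelofSpace_prod Y
    (hZ.isClosedEmbedding_subtypeVal.prodMap .id).LindelofSpace

theorem prod_of_compactSpace (hX : ProductivelyQuasiLindelofSp X) (K : Type u)
    [TopologicalSpace K] [CompactSpace K] [T2Space K] : ProductivelyQuasiLindelofSp (X × K) :=
  of_forall_lindelofSpace_prod fun Y _ _ _ _ =>
    have := lindelofSpace_prod_of_compactSpace (K := K) (Y := Y)
    have := hX.lindelofSpace_prod (K × Y)
    .of_continuous_surjective (Homeomorph.prodAssoc X K Y).symm.continuous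
      (Homeomorph.prodAssoc X K Y).symm.surjective

end ProductivelyQuasiLindelofSp

/-- The well-ordered set of countable ordinals, in an arbitrary universe. -/
abbrev OmegaOne : Type u := (ω_ 1 : Ordinal.{u}).ToType

namespace OmegaOne

theorem mk_eq : #OmegaOne.{u} = ℵ₁ := by
  rw [Cardinal.mk_toType, Ordinal.card_omega]

theorem nonempty_embedding {ι : Type u} (h : #ι ≤ ℵ₁) : Nonempty (ι ↪ OmegaOne.{u}) := by
  rwa [← mk_eq, Cardinal.le_def] at h

theorem exists_reindexing {α : Type u} {β : Type*} (hα : #α ≤ ℵ₁) {p : β → Prop}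
    (hp : ∃ b, p b) {f : α → β} (hf : ∀ a, p (f a)) :
    ∃ (g : OmegaOne.{u} → β) (e : α → OmegaOne.{u}), (∀ γ, p (g γ)) ∧ ∀ a, g (e a) = f a := by
  obtain ⟨e⟩ := nonempty_embedding hα
  obtain ⟨b, hb⟩ := hp
  refine ⟨Function.extend e f fun _ => b, e, fun γ => ?_, e.injective.extend_apply _ _⟩
  by_cases hγ : ∃ a, e a = γ
  · obtain ⟨a, rfl⟩ := hγ
    rw [e.injective.extend_apply]
    exact hf a
  · rwa [Function.extend_apply' _ _ _ hγ]

theorem countable_Iio (γ : OmegaOne.{u}) : (Iio γ).Countable := by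
  rw [← Cardinal.le_aleph0_iff_set_countable, ← Cardinal.lt_aleph_one_iff, ← mk_eq]
  exact Cardinal.mk_Iio_lt γ (by rw [mk_eq, Ordinal.type_toType, Cardinal.ord_aleph])

theorem exists_subset_Iio {s : Set OmegaOne.{u}} (hs : s.Countable) : ∃ γ, s ⊆ Iio γ := by
  by_contra! h
  have hcov : ⋃ i ∈ s, Iic i = Set.univ := eq_univ_of_forall fun γ =>
    let ⟨_, hi, hγ⟩ := not_subset.1 (h γ)
    mem_biUnion hi (mem_Iic.2 (not_lt.1 hγ))
  have huniv : (Set.univ : Set OmegaOne.{u}).Countable :=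
    hcov ▸ hs.biUnion fun i _ => Iio_insert (a := i) ▸ (countable_Iio i).insert i
  rw [← Cardinal.le_aleph0_iff_set_countable, Cardinal.mk_univ, mk_eq] at huniv
  exact huniv.not_gt Cardinal.aleph0_lt_aleph_one

instance : Nonempty OmegaOne.{u} := (exists_subset_Iio countable_empty).nonempty

instance : NoMaxOrder OmegaOne.{u} :=
  ⟨fun α => let ⟨γ, hγ⟩ := exists_subset_Iio (countable_singleton α); ⟨γ, hγ rfl⟩⟩

theorem exists_isLUB_range (a : ℕ → OmegaOne.{u}) : ∃ γ, IsLUB (range a) γ := by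
  obtain ⟨β, hβ⟩ := exists_subset_Iio (countable_range a)
  obtain ⟨γ, hγ, hmin⟩ := wellFounded_lt.has_min (upperBounds (range a))
    ⟨β, fun _ hi => (hβ hi).le⟩
  exact ⟨γ, hγ, fun b hb => not_lt.1 (hmin b hb)⟩

theorem exists_Iio_closed (h : Finset OmegaOne.{u} → OmegaOne.{u}) :
    ∃ γ, ∀ q : Finset OmegaOne.{u}, (q : Set OmegaOne.{u}) ⊆ Iio γ → h q < γ := by
  have hstep (β : OmegaOne.{u}) :
      ∃ δ, β < δ ∧ ∀ q : Finset OmegaOne.{u}, ↑q ⊆ Iio β → h q < δ := by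
    have hfin := countable_ofPred_finite_subset (countable_Iio β)
    have hq : {q : Finset OmegaOne.{u} | ↑q ⊆ Iio β}.Countable :=
      (hfin.preimage Finset.coe_injective).mono fun q hq => And.intro q.finite_toSet hq
    obtain ⟨δ, hδ⟩ := exists_subset_Iio ((hq.image h).insert β)
    exact ⟨δ, hδ (mem_insert _ _), fun q hq => hδ (mem_insert_of_mem _ (mem_image_of_mem h hq))⟩
  choose next hlt hnext using hstep
  let a (n : ℕ) : OmegaOne.{u} := next^[n] (Classical.arbitrary _)
  have ha : StrictMono a := strictMono_nat_of_lt_succ fun n => by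
    simp only [a, Function.iterate_succ_apply', hlt]
  obtain ⟨γ, hγ⟩ := exists_isLUB_range a
  refine ⟨γ, fun q hq => ?_⟩
  have hmono : Monotone fun n => Iio (a n) := fun _ _ hmn => Iio_subset_Iio (ha.monotone hmn)
  have hcov : (q : Set OmegaOne.{u}) ⊆ ⋃ n, Iio (a n) := fun i hi =>
    let ⟨_, ⟨n, rfl⟩, hn⟩ := (lt_isLUB_iff hγ).1 (hq hi)
    mem_iUnion.2 ⟨n, hn⟩
  obtain ⟨n, hn⟩ := hmono.directed_le.exists_mem_subset_of_finset_subset_biUnion hcov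
  calc h q < a (n + 1) := by
        simpa only [a, Function.iterate_succ_apply'] using hnext (a n) q hn
    _ ≤ γ := hγ.1 (mem_range_self _)

end OmegaOne

theorem exists_selection_countable_preimage {α ι : Type u} (hι : #ι ≤ ℵ₁) {Z : Set α}
    {G : ι → Set α} (hZ : ∀ s : Set ι, s.Countable → ¬Z ⊆ ⋃ i ∈ s, G i) :
    ∃ z : ι → α, (∀ i, z i ∈ Z) ∧ ∀ i, (z ⁻¹' G i).Countable := by
  obtain ⟨e⟩ := OmegaOne.nonempty_embedding hι
  have hlt (i : ι) : {k | e k < e i}.Countable :=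
    (OmegaOne.countable_Iio (e i)).preimage e.injective
  choose z hzZ hz using fun i => not_subset.1 (hZ _ (hlt i))
  refine ⟨z, hzZ, fun i => ((hlt i).insert i).mono fun k hk => ?_⟩
  rcases lt_trichotomy (e k) (e i) with h | h | h
  · exact .inr h
  · exact .inl (e.injective h)
  · exact (hz k (mem_biUnion h hk)).elim

section Michael

variable {K ι : Type u} [TopologicalSpace K] [TopologicalSpace ι]

/-- The Michael-line-type subspace of `K × OnePoint ι` formed by a copy `E × {∞}` of `E` together
with the points `(z i, i)`, which are isolated when `ι` is discrete. It serves
as the second factor of a non-Lindelöf product. -/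
def michaelSpace (E : Set K) (z : ι → K) : Set (K × OnePoint ι) :=
  (·, OnePoint.infty) '' E ∪ range fun i => (z i, (i : OnePoint ι))

theorem isOpen_preimage_snd_coe [DiscreteTopology ι] (i : ι) :
    IsOpen ((Prod.snd : K × OnePoint ι → OnePoint ι) ⁻¹' {(i : OnePoint ι)}) :=
  .preimage continuous_snd (by
    simpa only [image_singleton] using OnePoint.isOpenEmbedding_coe.isOpenMap _
      (isOpen_discrete {i}))

theorem exists_countable_subcover_prod_onePoint [DiscreteTopology ι] {κ : Type*} {N : Set K}
    (hN : IsLindelof N) {U : κ → Set (K × OnePoint ι)} (hU : ∀ j, IsOpen (U j))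
    (hcov : N ×ˢ {OnePoint.infty} ⊆ ⋃ j, U j) :
    ∃ (t : Set κ) (F : Set ι), t.Countable ∧ F.Countable ∧
      N ×ˢ ((↑) '' F)ᶜ ⊆ ⋃ j ∈ t, U j := by
  let V : κ ⊕ ι → Set (K × OnePoint ι) := Sum.elim U fun i => Prod.snd ⁻¹' {(i : OnePoint ι)}
  have hVcov : Prod.fst ⁻¹' N ⊆ ⋃ v, V v := by
    rintro ⟨k, _ | i⟩ hk
    · obtain ⟨j, hj⟩ := mem_iUnion.1 (hcov ⟨hk, rfl⟩)
      exact mem_iUnion.2 ⟨.inl j, hj⟩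
    · exact mem_iUnion.2 ⟨.inr i, rfl⟩
  obtain ⟨t, ht, htV⟩ :=
    (isLindelof_preimage_of_isProperMap hN isProperMap_fst_of_compactSpace).elim_countable_subcover
      V (Sum.forall.2 ⟨hU, isOpen_preimage_snd_coe⟩) hVcov
  refine ⟨Sum.inl ⁻¹' t, Sum.inr ⁻¹' t, ht.preimage Sum.inl_injective,
    ht.preimage Sum.inr_injective, fun p hp => ?_⟩
  obtain ⟨j | i, hv, hpv⟩ := mem_iUnion₂.1 (htV hp.1)
  · exact mem_biUnion hv hpv
  · exact (hp.2 ⟨i, hv, hpv.symm⟩).elim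

theorem isLindelof_michaelSpace [DiscreteTopology ι] {G : ι → Set K} {z : ι → K}
    (hclosed : ∀ C, IsClosed C → C ⊆ ⋃ i, G i → ∃ s : Set ι, s.Countable ∧ C ⊆ ⋃ i ∈ s, G i)
    (hcompl : ∀ s : Set ι, s.Countable → IsLindelof (⋃ i ∈ s, G i)ᶜ)
    (hz : ∀ i, (z ⁻¹' G i).Countable) :
    IsLindelof (michaelSpace (⋃ i, G i)ᶜ z) := by
  refine isLindelof_of_countable_subcover fun {κ} U hU hcov => ?_
  let C : Set K := {k | (k, OnePoint.infty) ∉ ⋃ j, U j}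
  have hC : IsClosed C := (isOpen_iUnion hU).isClosed_compl.preimage (by fun_prop)
  have hCG : C ⊆ ⋃ i, G i := fun k hk =>
    not_not.1 fun h => hk (hcov (.inl (mem_image_of_mem _ h)))
  obtain ⟨s, hs, hCs⟩ := hclosed C hC hCG
  obtain ⟨t, F, ht, hF, htU⟩ := exists_countable_subcover_prod_onePoint (hcompl s hs) hU <| by
    rintro ⟨k, _⟩ ⟨hk, rfl⟩
    exact not_not.1 fun h => hk (hCs h)
  have hzs : (z ⁻¹' ⋃ i ∈ s, G i).Countable := by
    rw [preimage_iUnion₂]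
    exact hs.biUnion fun i _ => hz i
  obtain ⟨r, hr, hrU⟩ := ((hF.union hzs).image fun i => (z i, (i : OnePoint ι))).isLindelof
    |>.elim_countable_subcover U hU
      ((image_subset_range _ _).trans (subset_union_right.trans hcov))
  refine ⟨t ∪ r, ht.union hr, ?_⟩
  rw [biUnion_union]
  rintro _ (⟨k, hk, rfl⟩ | ⟨i, rfl⟩)
  · exact .inl (htU ⟨fun h => hk (iUnion₂_subset_iUnion _ _ h), OnePoint.infty_notMem_image_coe⟩)
  · by_cases hi : i ∈ F ∪ z ⁻¹' ⋃ i ∈ s, G i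
    · exact .inr (hrU (mem_image_of_mem _ hi))
    · exact .inl (htU ⟨fun h => hi (.inr h),
        fun h => hi (.inl ((OnePoint.coe_injective.mem_set_image).1 h))⟩)

theorem ProductivelyQuasiLindelofSp.countable_of_isLindelof_michaelSpace [T3Space K]
    [DiscreteTopology ι] {Z E : Set K} {z : ι → K} (hZ : ProductivelyQuasiLindelofSp Z)
    (hzZ : ∀ i, z i ∈ Z) (hE : Disjoint E Z) (hL : IsLindelof (michaelSpace E z)) :
    Countable ι := by
  have := isLindelof_iff_lindelofSpace.1 hL
  have := hZ.lindelofSpace_prod (michaelSpace E z)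
  let U : Option ι → Set (Z × michaelSpace E z) := fun o =>
    o.elim {p | (p.1 : K) ≠ p.2.1.1} fun i => {p | p.2.1.2 = i}
  have hU : ∀ o, IsOpen (U o) := by
    rintro (_ | i)
    · exact isOpen_ne_fun (by fun_prop) (by fun_prop)
    · exact (isOpen_preimage_snd_coe i).preimage (continuous_subtype_val.comp continuous_snd)
  have hcov : Set.univ ⊆ ⋃ o, U o := by
    rintro ⟨x, _, ⟨k, hk, rfl⟩ | ⟨i, rfl⟩⟩ -
    · exact mem_iUnion.2 ⟨none, fun h : (x : K) = k => disjoint_left.1 hE hk (h ▸ x.2)⟩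
    · exact mem_iUnion.2 ⟨some i, rfl⟩
  obtain ⟨t, ht, htU⟩ := isLindelof_univ.elim_countable_subcover U hU hcov
  refine countable_univ_iff.1 ((ht.preimage (Option.some_injective ι)).mono fun i _ => ?_)
  obtain ⟨o | j, hv, hi⟩ :=
    mem_iUnion₂.1 (htU (mem_univ (⟨z i, hzZ i⟩, ⟨(z i, i), .inr ⟨i, rfl⟩⟩)))
  · exact (hi rfl).elim
  · exact (OnePoint.coe_injective hi : i = j) ▸ hv

end Michael

theorem ProductivelyQuasiLindelofSp.exists_countable_cover {K ι : Type u} [TopologicalSpace K]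
    [T3Space K] {Z : Set K} (hZ : ProductivelyQuasiLindelofSp Z) {G : ι → Set K}
    (hι : #ι ≤ ℵ₁) (hcov : Z ⊆ ⋃ i, G i)
    (hclosed : ∀ C, IsClosed C → C ⊆ ⋃ i, G i → ∃ s : Set ι, s.Countable ∧ C ⊆ ⋃ i ∈ s, G i)
    (hcompl : ∀ s : Set ι, s.Countable → IsLindelof (⋃ i ∈ s, G i)ᶜ) :
    ∃ s : Set ι, s.Countable ∧ Z ⊆ ⋃ i ∈ s, G i := by
  by_contra! hcon
  obtain ⟨z, hzZ, hz⟩ := exists_selection_countable_preimage hι hcon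
  let _ : TopologicalSpace ι := ⊥
  have : DiscreteTopology ι := ⟨rfl⟩
  have := hZ.countable_of_isLindelof_michaelSpace hzZ
    (disjoint_compl_left_iff_subset.2 hcov) (isLindelof_michaelSpace hclosed hcompl hz)
  exact hcon Set.univ (to_countable _) (by rwa [biUnion_univ])

theorem mk_isClosed_le_continuum {Y : Type u} [TopologicalSpace Y] [SecondCountableTopology Y] :
    #{C : Set Y // IsClosed C} ≤ 𝔠 := by
  let b := TopologicalSpace.countableBasis Y
  let code (C : {C : Set Y // IsClosed C}) : 𝒫 b := ⟨{v ∈ b | v ⊆ C.1ᶜ}, sep_subset _ _⟩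
  have hcode (C) : C.1ᶜ = ⋃₀ code C :=
    (TopologicalSpace.isBasis_countableBasis Y).open_eq_sUnion' C.2.isOpen_compl
  have hinj : Function.Injective code := fun C D h =>
    Subtype.ext (compl_injective (by rw [hcode C, hcode D, h]))
  calc #{C : Set Y // IsClosed C} ≤ #(𝒫 b) := Cardinal.mk_le_of_injective hinj
    _ = 2 ^ #b := Cardinal.mk_powerset b
    _ ≤ 2 ^ ℵ₀ := Cardinal.power_le_power_left two_ne_zero
      (TopologicalSpace.countable_countableBasis Y).le_aleph0
    _ = 𝔠 := Cardinal.two_power_aleph0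

theorem ProductivelyQuasiLindelofSp.isSigmaCompact (hCH : (𝔠 : Cardinal.{u}) = ℵ₁) {K : Type u}
    [TopologicalSpace K] [CompactSpace K] [T2Space K] [SecondCountableTopology K] {Z : Set K}
    (hZ : ProductivelyQuasiLindelofSp Z) : IsSigmaCompact Z := by
  let ι := {C : {C : Set K // IsClosed C} // C.1 ⊆ Z}
  let G : ι → Set K := fun C => C.1.1
  obtain ⟨s, hs, hZs⟩ := hZ.exists_countable_cover (G := G)
    ((mk_subtype_le _).trans (mk_isClosed_le_continuum.trans hCH.le))
    (fun x hx => mem_iUnion.2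
      ⟨⟨⟨{x}, isClosed_singleton⟩, singleton_subset_iff.2 hx⟩, mem_singleton x⟩)
    (fun C hC hCG => ⟨{⟨⟨C, hC⟩, hCG.trans (iUnion_subset fun C => C.2)⟩}, countable_singleton _,
      by rw [biUnion_singleton]⟩)
    (fun _ _ => HereditarilyLindelofSpace.isLindelof _)
  have hZeq : Z = ⋃ C ∈ s, G C := hZs.antisymm (iUnion₂_subset fun C _ => C.2)
  exact hZeq ▸ isSigmaCompact_biUnion hs fun C _ => C.1.2.isCompact.isSigmaCompact

section Saturation

variable {I : Type*} {s t : Set I} {S T : Set (I → Bool)}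

/-- The cylinder over the projection of `S` to the coordinates in `s`: the smallest superset of `S`
that depends only on these coordinates. -/
def saturation (s : Set I) (S : Set (I → Bool)) : Set (I → Bool) :=
  s.domRestrict ⁻¹' (s.domRestrict '' S)

theorem mem_saturation {x : I → Bool} :
    x ∈ saturation s S ↔ ∃ y ∈ S, ∀ i ∈ s, y i = x i := by
  simp only [saturation, mem_preimage, mem_image, domRestrict_eq_domRestrict_iff, EqOn]

theorem subset_saturation : S ⊆ saturation s S :=
  subset_preimage_image _ _

theorem saturation_subset_of_dependsOn (hT : DependsOn (· ∈ T) s) (h : S ⊆ T) :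
    saturation s S ⊆ T := fun _ hx =>
  let ⟨_, hy, hyx⟩ := mem_saturation.1 hx
  (hT hyx).mp (h hy)

theorem saturation_anti (h : s ⊆ t) : saturation t S ⊆ saturation s S := fun _ hx =>
  let ⟨y, hy, hyx⟩ := mem_saturation.1 hx
  mem_saturation.2 ⟨y, hy, fun i hi => hyx i (h hi)⟩

theorem saturation_mono (h : S ⊆ T) : saturation s S ⊆ saturation s T :=
  preimage_mono (image_mono h)

theorem dependsOn_preimage_domRestrict (R : Set (s → Bool)) :
    DependsOn (fun x : I → Bool => x ∈ s.domRestrict ⁻¹' R) s := fun x y h => by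
  simp only [mem_preimage, dependsOn_domRestrict s h]

theorem dependsOn_saturation : DependsOn (· ∈ saturation s S) s :=
  dependsOn_preimage_domRestrict _

theorem dependsOn_mem_biUnion {κ : Type*} {k : Set κ} {F : κ → Set (I → Bool)}
    (h : ∀ j ∈ k, DependsOn (· ∈ F j) s) : DependsOn (· ∈ ⋃ j ∈ k, F j) s := fun x y hxy => by
  simp only [mem_iUnion₂, eq_iff_iff]
  exact exists₂_congr fun j hj => (h j hj hxy).to_iff

theorem dependsOn_mem_inter (hS : DependsOn (· ∈ S) s) (hT : DependsOn (· ∈ T) s) :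
    DependsOn (· ∈ S ∩ T) s := fun x y hxy => by
  simp only [mem_inter_iff, hS hxy, hT hxy]

theorem isClosed_saturation (hS : IsCompact S) : IsClosed (saturation s S) :=
  (hS.image (Pi.continuous_domRestrict s)).isClosed.preimage (Pi.continuous_domRestrict s)

theorem isLindelof_of_dependsOn (hs : s.Countable) (hS : DependsOn (· ∈ S) s) :
    IsLindelof S := by
  have := hs.to_subtype
  have hSeq : saturation s S = S :=
    (saturation_subset_of_dependsOn hS subset_rfl).antisymm subset_saturation
  rw [← hSeq]
  exact isLindelof_preimage_of_isProperMap (HereditarilyLindelofSpace.isLindelof _)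
    (Pi.continuous_domRestrict s).isProperMap

theorem exists_finset_saturation_subset {U : Set (I → Bool)} (hS : IsCompact S) (hU : IsOpen U)
    (h : S ⊆ U) : ∃ q : Finset I, saturation q S ⊆ U := by
  classical
  refine hS.induction_on (p := fun S => ∃ q : Finset I, saturation q S ⊆ U) ⟨∅, ?_⟩ ?_ ?_ ?_
  · simp only [saturation, image_empty, preimage_empty, empty_subset]
  · exact fun S T hST ⟨q, hq⟩ => ⟨q, (saturation_mono hST).trans hq⟩
  · rintro S T ⟨q, hq⟩ ⟨r, hr⟩
    refine ⟨q ∪ r, ?_⟩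
    rw [saturation, image_union, preimage_union, union_subset_iff]
    exact ⟨(saturation_anti (Finset.coe_subset.2 Finset.subset_union_left)).trans hq,
      (saturation_anti (Finset.coe_subset.2 Finset.subset_union_right)).trans hr⟩
  · intro x hx
    obtain ⟨q, V, hV, hqV⟩ := isOpen_pi_iff.1 hU x (h hx)
    refine ⟨_, mem_nhdsWithin_of_mem_nhds (set_pi_mem_nhds q.finite_toSet fun i hi =>
      (hV i hi).1.mem_nhds (hV i hi).2), q, fun y hy => hqV fun i hi => ?_⟩
    obtain ⟨z, hz, hzy⟩ := mem_saturation.1 hy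
    exact hzy i hi ▸ hz i hi

theorem exists_countable_saturation_subset {D : Set (I → Bool)} (hS : IsCompact S) (hD : IsGδ D)
    (h : S ⊆ D) : ∃ s : Set I, s.Countable ∧ saturation s S ⊆ D := by
  obtain ⟨U, hU, rfl⟩ := isGδ_iff_eq_iInter_nat.1 hD
  choose q hq using fun n =>
    exists_finset_saturation_subset hS (hU n) (h.trans (iInter_subset U n))
  exact ⟨⋃ n, q n, countable_iUnion fun n => (q n).countable_toSet,
    subset_iInter fun n =>
      (saturation_anti (subset_iUnion (fun n => (q n : Set I)) n)).trans (hq n)⟩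

end Saturation

theorem ProductivelyQuasiLindelofSp.exists_isClosed_iUnion_eq_saturation {I : Type u}
    (hCH : (𝔠 : Cardinal.{u}) = ℵ₁) {Z : Set (I → Bool)} (hZ : ProductivelyQuasiLindelofSp Z)
    {s : Set I} (hs : s.Countable) :
    ∃ E : ℕ → Set (I → Bool), (∀ n, IsClosed (E n)) ∧ (∀ n, DependsOn (· ∈ E n) s) ∧
      ⋃ n, E n = saturation s Z := by
  have := hs.to_subtype
  have hr : Continuous (s.domRestrict : (I → Bool) → s → Bool) := Pi.continuous_domRestrict s
  obtain ⟨L, hL, hLZ⟩ := (hZ.image hr.continuousOn).isSigmaCompact hCH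
  exact ⟨fun n => s.domRestrict ⁻¹' L n, fun n => (hL n).isClosed.preimage hr,
    fun n => dependsOn_preimage_domRestrict _, by rw [← preimage_iUnion, hLZ, saturation]⟩

theorem exists_notMem_saturation_Iio {Z : Set (OmegaOne.{u} → Bool)} (hZ : IsLindelof Z)
    {x : OmegaOne.{u} → Bool} (hx : x ∉ Z) : ∃ γ, x ∉ saturation (Iio γ) Z := by
  obtain ⟨t, ht, htZ⟩ := hZ.elim_countable_subcover (fun i => {y | y i ≠ x i})
    (fun i => isOpen_ne_fun (continuous_apply i) continuous_const) fun y hy =>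
      mem_iUnion.2 (Function.ne_iff.1 fun h => hx (h ▸ hy))
  obtain ⟨γ, hγ⟩ := OmegaOne.exists_subset_Iio ht
  refine ⟨γ, fun h => ?_⟩
  obtain ⟨y, hy, hyx⟩ := mem_saturation.1 h
  obtain ⟨i, hi, hne⟩ := mem_iUnion₂.1 (htZ hy)
  exact hne (hyx i (hγ hi))

theorem exists_isOpen_inter_subset_of_closure_subset {Y : Type*} [TopologicalSpace Y]
    [CompactSpace Y] [T2Space Y] {R T : Set Y} {E : ℕ → Set Y} (hR : R.Nonempty)
    (hT : IsSigmaCompact T) (hRT : Disjoint R T) (hE : ∀ n, IsClosed (E n))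
    (hcov : closure R ⊆ T ∪ ⋃ n, E n) :
    ∃ n W, IsOpen W ∧ (R ∩ W).Nonempty ∧ R ∩ W ⊆ E n := by
  obtain ⟨L, hL, rfl⟩ := hT
  have : Nonempty (closure R) := hR.closure.to_subtype
  let F : ℕ ⊕ ℕ → Set (closure R) := Sum.elim (fun n => (↑) ⁻¹' L n) fun n => (↑) ⁻¹' E n
  have hF : ∀ k, IsClosed (F k) := Sum.forall.2
    ⟨fun n => (hL n).isClosed.preimage continuous_subtype_val,
      fun n => (hE n).preimage continuous_subtype_val⟩
  have : CompactSpace (closure R) := isCompact_iff_compactSpace.1 isClosed_closure.isCompact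
  have hFcov : ⋃ k, F k = Set.univ := by
    rw [iUnion_sum]
    simp only [F, Sum.elim_inl, Sum.elim_inr, ← preimage_iUnion]
    rw [← preimage_union]
    exact eq_univ_of_forall fun y => hcov y.2
  obtain ⟨k, ⟨y, hyR⟩, hy⟩ := nonempty_interior_of_iUnion_of_closed hF hFcov
  obtain ⟨W, hW, hWk⟩ := isOpen_induced_iff.1 (isOpen_interior (s := F k))
  have hsub : ∀ x (hx : x ∈ R), x ∈ W → ⟨x, subset_closure hx⟩ ∈ F k := fun x hx hxW =>
    interior_subset (hWk ▸ hxW : (⟨x, subset_closure hx⟩ : closure R) ∈ interior (F k))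
  have hne : (R ∩ W).Nonempty := by
    rw [inter_comm]
    exact mem_closure_iff.1 hyR W hW (hWk ▸ hy : (⟨y, hyR⟩ : closure R) ∈ (↑) ⁻¹' W)
  rcases k with n | n
  · obtain ⟨x, hxR, hxW⟩ := hne
    exact (disjoint_left.1 hRT hxR (mem_iUnion.2 ⟨n, hsub x hxR hxW⟩)).elim
  · exact ⟨n, W, hW, hne, fun x hx => hsub x hx.1 hx.2⟩

theorem exists_finset_forall_mem_of_subset_union {I : Type*} {s : Set I} {C T : Set (I → Bool)}
    {E : ℕ → Set (I → Bool)} (hC : IsClosed C) (hT : IsSigmaCompact T)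
    (hTs : DependsOn (· ∈ T) s) (hE : ∀ n, IsClosed (E n)) (hEs : ∀ n, DependsOn (· ∈ E n) s)
    (hcov : C ⊆ T ∪ ⋃ n, E n) (hCT : ¬C ⊆ T) :
    ∃ q : Finset I, ↑q ⊆ s ∧ ∃ x₀ ∈ C \ T, ∃ n, ∀ x ∈ C \ T, (∀ i ∈ q, x i = x₀ i) → x ∈ E n := by
  classical
  have hUE : DependsOn (· ∈ T ∪ ⋃ n, E n) s := fun x y hxy => by
    simp only [mem_union, mem_iUnion, hTs hxy, fun n => hEs n hxy]
  have hclosure : closure (saturation s C \ T) ⊆ T ∪ ⋃ n, E n :=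
    (closure_minimal sdiff_subset (isClosed_saturation hC.isCompact)).trans
      (saturation_subset_of_dependsOn hUE hcov)
  obtain ⟨n, W, hW, ⟨x, ⟨hxC, hxT⟩, hxW⟩, hWE⟩ := exists_isOpen_inter_subset_of_closure_subset
    ((sdiff_nonempty.2 hCT).mono (sdiff_subset_sdiff_left subset_saturation)) hT
    disjoint_sdiff_left hE hclosure
  obtain ⟨x₀, hx₀C, hx₀⟩ := mem_saturation.1 hxC
  obtain ⟨p, V, hV, hpV⟩ := isOpen_pi_iff.1 hW x hxW
  have hx₀T : x₀ ∉ T := fun h => hxT ((hTs hx₀).mp h)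
  refine ⟨p.filter (· ∈ s), fun i hi => (Finset.mem_filter.1 hi).2, x₀, ⟨hx₀C, hx₀T⟩, n,
    fun y ⟨hyC, hyT⟩ hy => ?_⟩
  -- Graft `y` on `s` onto `x` off `s`: the result still lies in the open set `W`.
  let y' : I → Bool := s.piecewise y x
  have hyy' : ∀ i ∈ s, y i = y' i := fun i hi => (s.piecewise_eq_of_mem y x hi).symm
  have hy'W : y' ∈ W := hpV fun i hi => by
    have hi' : y' i = x i := by
      by_cases his : i ∈ s
      · rw [← hyy' i his, hy i (Finset.mem_filter.2 ⟨hi, his⟩), hx₀ i his]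
      · exact s.piecewise_eq_of_notMem y x his
    exact hi' ▸ (hV i hi).2
  have hy' : y' ∈ saturation s C \ T :=
    ⟨mem_saturation.2 ⟨y, hyC, hyy'⟩, fun h => hyT ((hTs hyy').mpr h)⟩
  exact (hEs n hyy').mpr (hWE ⟨hy', hy'W⟩)

/-- A countable-valued increasing `ω₁`-sequence of families of closed subsets of `2^ω₁`, the
`γ`-th consisting of sets that depend only on coordinates below `γ`, whose members capture all
compact subsets of `Z`. -/
structure IsCapturingFiltration (Z : Set (OmegaOne.{u} → Bool))
    (ℱ : OmegaOne.{u} → Set (Set (OmegaOne.{u} → Bool))) : Prop where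
  monotone : Monotone ℱ
  countable : ∀ γ, (ℱ γ).Countable
  isClosed : ∀ γ, ∀ F ∈ ℱ γ, IsClosed F
  dependsOn : ∀ γ, ∀ F ∈ ℱ γ, DependsOn (· ∈ F) (Iio γ)
  exists_subset : ∀ C ⊆ Z, IsCompact C → ∃ γ, ∃ F ∈ ℱ γ, C ⊆ F

/-- The points that belong, for some `α < γ`, both to a member of `ℱ α` and to the cylinder over
the projection of `Z` to the coordinates below `α`. For a capturing filtration,
these sets form an increasing cover of `Z`. -/
def captured (Z : Set (OmegaOne.{u} → Bool)) (ℱ : OmegaOne.{u} → Set (Set (OmegaOne.{u} → Bool)))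
    (γ : OmegaOne.{u}) : Set (OmegaOne.{u} → Bool) :=
  ⋃ α ∈ Iio γ, saturation (Iio α) Z ∩ ⋃₀ ℱ α

section Captured

variable {Z : Set (OmegaOne.{u} → Bool)} {ℱ : OmegaOne.{u} → Set (Set (OmegaOne.{u} → Bool))}
  {α γ δ : OmegaOne.{u}}

theorem captured_mono (h : γ ≤ δ) : captured Z ℱ γ ⊆ captured Z ℱ δ :=
  biUnion_subset_biUnion_left (Iio_subset_Iio h)

theorem mem_captured {F : Set (OmegaOne.{u} → Bool)} {x : OmegaOne.{u} → Bool} (hαγ : α < γ)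
    (hF : F ∈ ℱ α) (hxZ : x ∈ saturation (Iio α) Z) (hxF : x ∈ F) : x ∈ captured Z ℱ γ :=
  mem_biUnion (mem_Iio.2 hαγ) ⟨hxZ, F, hF, hxF⟩

theorem captured_sdiff_subset_saturation :
    captured Z ℱ δ \ captured Z ℱ γ ⊆ saturation (Iio γ) Z := by
  rintro x ⟨hxδ, hxγ⟩
  obtain ⟨α, -, hxZ, F, hF, hxF⟩ := mem_iUnion₂.1 hxδ
  have hγα : γ ≤ α := not_lt.1 fun hαγ => hxγ (mem_captured hαγ hF hxZ hxF)
  exact saturation_anti (Iio_subset_Iio hγα) hxZ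

namespace IsCapturingFiltration

theorem captured_subset (hℱ : IsCapturingFiltration Z ℱ) : captured Z ℱ γ ⊆ ⋃₀ ℱ γ :=
  iUnion₂_subset fun _ hα => inter_subset_right.trans (sUnion_subset_sUnion (hℱ.monotone hα.le))

theorem subset_iUnion_captured (hℱ : IsCapturingFiltration Z ℱ) : Z ⊆ ⋃ γ, captured Z ℱ γ := by
  intro x hx
  obtain ⟨α, F, hF, hxF⟩ := hℱ.exists_subset {x} (singleton_subset_iff.2 hx) isCompact_singleton
  obtain ⟨γ, hγ⟩ := exists_gt α
  exact mem_iUnion.2 ⟨γ, mem_captured hγ hF (subset_saturation hx) (hxF rfl)⟩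

theorem dependsOn_captured (hℱ : IsCapturingFiltration Z ℱ) :
    DependsOn (· ∈ captured Z ℱ γ) (Iio γ) := by
  refine dependsOn_mem_biUnion fun α hα => ?_
  have hα' : DependsOn (· ∈ saturation (Iio α) Z ∩ ⋃₀ ℱ α) (Iio α) := by
    rw [sUnion_eq_biUnion]
    exact dependsOn_mem_inter dependsOn_saturation (dependsOn_mem_biUnion (hℱ.dependsOn α))
  exact hα'.mono (Iio_subset_Iio (le_of_lt hα))

theorem isSigmaCompact_captured (hℱ : IsCapturingFiltration Z ℱ)
    (hCH : (𝔠 : Cardinal.{u}) = ℵ₁) (hZ : ProductivelyQuasiLindelofSp Z) :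
    IsSigmaCompact (captured Z ℱ γ) := by
  refine isSigmaCompact_biUnion (OmegaOne.countable_Iio γ) fun α _ => ?_
  obtain ⟨E, hE, -, hEZ⟩ := hZ.exists_isClosed_iUnion_eq_saturation hCH (OmegaOne.countable_Iio α)
  rw [← hEZ, iUnion_inter]
  refine isSigmaCompact_iUnion _ fun n => ?_
  rw [sUnion_eq_biUnion, inter_iUnion₂]
  exact isSigmaCompact_biUnion (hℱ.countable α) fun F hF =>
    ((hE n).inter (hℱ.isClosed α F hF)).isCompact.isSigmaCompact

-- If there were unboundedly many such `γ`, the intersection of the sets `E γ` would be a compact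
-- subset of `Z`, hence contained in a member of some `ℱ α`; by the Lindelöf property countably many
-- `E γ` already suffice, so the remaining points of `D` would be captured at a bounded stage.
theorem exists_forall_lt_of_sdiff_subset (hℱ : IsCapturingFiltration Z ℱ) (hZ : IsLindelof Z)
    {E : OmegaOne.{u} → Set (OmegaOne.{u} → Bool)} (hE : ∀ γ, IsClosed (E γ))
    (hEZ : ∀ γ, E γ ⊆ saturation (Iio γ) Z) (D : Set (OmegaOne.{u} → Bool)) :
    ∃ β, ∀ γ, (D \ captured Z ℱ γ).Nonempty → D \ captured Z ℱ γ ⊆ E γ → γ < β := by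
  by_contra! hunb
  let Γ : Set OmegaOne.{u} := {γ | (D \ captured Z ℱ γ).Nonempty ∧ D \ captured Z ℱ γ ⊆ E γ}
  have hΓ (β) : ∃ γ ∈ Γ, β < γ := by
    obtain ⟨β', hβ'⟩ := exists_gt β
    obtain ⟨γ, hne, hsub, hγ⟩ := hunb β'
    exact ⟨γ, ⟨hne, hsub⟩, hβ'.trans_le hγ⟩
  have hcompact : IsCompact (⋂ γ ∈ Γ, E γ) := (isClosed_biInter fun γ _ => hE γ).isCompact
  have hsubZ : ⋂ γ ∈ Γ, E γ ⊆ Z := by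
    intro x hx
    by_contra hxZ
    obtain ⟨β, hβ⟩ := exists_notMem_saturation_Iio hZ hxZ
    obtain ⟨γ, hγ, hβγ⟩ := hΓ β
    exact hβ (saturation_anti (Iio_subset_Iio hβγ.le) (hEZ γ (mem_iInter₂.1 hx γ hγ)))
  obtain ⟨α, F, hF, hsubF⟩ := hℱ.exists_subset _ hsubZ hcompact
  have hFc : IsLindelof Fᶜ := isLindelof_of_dependsOn (OmegaOne.countable_Iio α) fun x y hxy => by
    simp only [mem_compl_iff, hℱ.dependsOn α F hF hxy]
  obtain ⟨r, hrΓ, hr, hrF⟩ := hFc.elim_countable_subcover_image (b := Γ) (c := fun γ => (E γ)ᶜ)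
    (fun γ _ => (hE γ).isOpen_compl) (by rwa [← compl_iInter₂, compl_subset_compl])
  rw [← compl_iInter₂, compl_subset_compl] at hrF
  obtain ⟨β, hβ⟩ := OmegaOne.exists_subset_Iio (hr.insert α)
  obtain ⟨γ, hγ, hβγ⟩ := hΓ β
  obtain ⟨δ, ⟨⟨x, hxD, hxδ⟩, -⟩, hγδ⟩ := hΓ γ
  have hx (η) (hη : η ∈ Γ) (hηδ : η ≤ δ) : x ∈ E η :=
    hη.2 ⟨hxD, fun h => hxδ (captured_mono hηδ h)⟩
  have hxF : x ∈ F := hrF (mem_iInter₂.2 fun η hη =>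
    hx η (hrΓ hη) ((hβ (mem_insert_of_mem α hη)).trans (hβγ.trans hγδ)).le)
  have hFγ : F ∈ ℱ γ := hℱ.monotone ((hβ (mem_insert α r)).trans hβγ).le hF
  exact hxδ (mem_captured hγδ hFγ (hEZ γ (hx γ hγ hγδ.le)) hxF)

theorem exists_subset_captured (hℱ : IsCapturingFiltration Z ℱ) (hCH : (𝔠 : Cardinal.{u}) = ℵ₁)
    (hZ : ProductivelyQuasiLindelofSp Z) {C : Set (OmegaOne.{u} → Bool)} (hC : IsClosed C)
    (hCcov : C ⊆ ⋃ γ, captured Z ℱ γ) : ∃ γ, C ⊆ captured Z ℱ γ := by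
  by_contra! hCT
  choose E hE hEdep hEZ using fun γ : OmegaOne.{u} =>
    hZ.exists_isClosed_iUnion_eq_saturation hCH (OmegaOne.countable_Iio γ)
  have hLZ : IsLindelof Z := isLindelof_iff_lindelofSpace.2 hZ.lindelofSpace
  choose β hβ using fun (q : Finset OmegaOne.{u}) (v : q → Bool) (n : ℕ) =>
    hℱ.exists_forall_lt_of_sdiff_subset hLZ (fun γ => hE γ n)
      (fun γ => hEZ γ ▸ subset_iUnion (E γ) n) {x ∈ C | ∀ i : q, x i = v i}
  choose h hh using fun q : Finset OmegaOne.{u} =>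
    OmegaOne.exists_subset_Iio (countable_range fun p : (q → Bool) × ℕ => β q p.1 p.2)
  obtain ⟨γ, hγ⟩ := OmegaOne.exists_Iio_closed h
  have hcov : C ⊆ captured Z ℱ γ ∪ ⋃ n, E γ n := by
    intro x hx
    obtain ⟨δ, hδ⟩ := mem_iUnion.1 (hCcov hx)
    rw [hEZ]
    exact or_iff_not_imp_left.2 fun hxγ => captured_sdiff_subset_saturation ⟨hδ, hxγ⟩
  obtain ⟨q, hqγ, x₀, ⟨hx₀C, hx₀T⟩, n, hn⟩ := exists_finset_forall_mem_of_subset_union hC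
    (hℱ.isSigmaCompact_captured hCH hZ) hℱ.dependsOn_captured (hE γ) (hEdep γ) hcov (hCT γ)
  have hlt : γ < β q (fun i => x₀ i) n := hβ q _ n γ ⟨x₀, ⟨hx₀C, fun _ => rfl⟩, hx₀T⟩
    fun x hx => hn x ⟨hx.1.1, hx.2⟩ fun i hi => hx.1.2 ⟨i, hi⟩
  exact lt_irrefl γ (hlt.trans ((hh q (mem_range_self (_, n))).trans (hγ q hqγ)))

theorem exists_subset_sUnion (hℱ : IsCapturingFiltration Z ℱ) (hCH : (𝔠 : Cardinal.{u}) = ℵ₁)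
    (hZ : ProductivelyQuasiLindelofSp Z) : ∃ γ, Z ⊆ ⋃₀ ℱ γ := by
  have hcompl (s : Set OmegaOne.{u}) (hs : s.Countable) :
      IsLindelof (⋃ γ ∈ s, captured Z ℱ γ)ᶜ := by
    obtain ⟨γ, hγ⟩ := OmegaOne.exists_subset_Iio hs
    have hdep : DependsOn (· ∈ ⋃ γ ∈ s, captured Z ℱ γ) (Iio γ) := dependsOn_mem_biUnion
      fun α hα => hℱ.dependsOn_captured.mono (Iio_subset_Iio (le_of_lt (hγ hα)))
    refine isLindelof_of_dependsOn (OmegaOne.countable_Iio γ) fun x y hxy => ?_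
    simp only [mem_compl_iff, hdep hxy]
  obtain ⟨s, hs, hZs⟩ := hZ.exists_countable_cover OmegaOne.mk_eq.le hℱ.subset_iUnion_captured
    (fun C hC hCcov =>
      let ⟨γ, hγ⟩ := hℱ.exists_subset_captured hCH hZ hC hCcov
      ⟨{γ}, countable_singleton γ, by rwa [biUnion_singleton]⟩) hcompl
  obtain ⟨γ, hγ⟩ := OmegaOne.exists_subset_Iio hs
  exact ⟨γ, hZs.trans (iUnion₂_subset fun α hα =>
    (captured_mono (le_of_lt (hγ hα))).trans hℱ.captured_subset)⟩

end IsCapturingFiltration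

end Captured

/-- The Alster property, for subsets of a space: every family of `Gδ` sets such that each compact
subset of `Z` lies in a single member has a countable subfamily covering `Z`. -/
def IsAlster {Y : Type*} [TopologicalSpace Y] (Z : Set Y) : Prop :=
  ∀ 𝒟 : Set (Set Y), (∀ D ∈ 𝒟, IsGδ D) → (∀ C ⊆ Z, IsCompact C → ∃ D ∈ 𝒟, C ⊆ D) →
    ∃ 𝒞 ⊆ 𝒟, 𝒞.Countable ∧ Z ⊆ ⋃₀ 𝒞

theorem mk_isClosed_dependsOn_Iio_le_continuum :
    #{F : Set (OmegaOne.{u} → Bool) // IsClosed F ∧ ∃ γ, DependsOn (· ∈ F) (Iio γ)} ≤ 𝔠 := by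
  have hcyl : {F : Set (OmegaOne.{u} → Bool) | IsClosed F ∧ ∃ γ, DependsOn (· ∈ F) (Iio γ)} ⊆
      range fun p : Σ γ : OmegaOne.{u}, {C : Set (Iio γ → Bool) // IsClosed C} =>
        (Iio p.1).domRestrict ⁻¹' p.2.1 := by
    rintro F ⟨hF, γ, hγ⟩
    exact ⟨⟨γ, _, (hF.isCompact.image (Pi.continuous_domRestrict _)).isClosed⟩,
      (saturation_subset_of_dependsOn hγ subset_rfl).antisymm subset_saturation⟩
  have hle (γ : OmegaOne.{u}) : #{C : Set (Iio γ → Bool) // IsClosed C} ≤ 𝔠 :=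
    have := (OmegaOne.countable_Iio γ).to_subtype
    mk_isClosed_le_continuum
  calc _ ≤ #(Σ γ : OmegaOne.{u}, {C : Set (Iio γ → Bool) // IsClosed C}) :=
        (mk_le_mk_of_subset hcyl).trans mk_range_le
    _ ≤ Cardinal.sum fun _ : OmegaOne.{u} => 𝔠 := by
        rw [mk_sigma]
        exact sum_le_sum _ _ hle
    _ = ℵ₁ * 𝔠 := by rw [sum_const', OmegaOne.mk_eq]
    _ ≤ 𝔠 * 𝔠 := mul_le_mul_left aleph_one_le_continuum 𝔠
    _ = 𝔠 := continuum_mul_self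

theorem exists_isCapturingFiltration (hCH : (𝔠 : Cardinal.{u}) = ℵ₁)
    {Z : Set (OmegaOne.{u} → Bool)} {𝒮 : Set (Set (OmegaOne.{u} → Bool))}
    (hclosed : ∀ F ∈ 𝒮, IsClosed F) (hdep : ∀ F ∈ 𝒮, ∃ γ, DependsOn (· ∈ F) (Iio γ))
    (hcap : ∀ C ⊆ Z, IsCompact C → ∃ F ∈ 𝒮, C ⊆ F) :
    ∃ ℱ, IsCapturingFiltration Z ℱ ∧ ∀ γ, ℱ γ ⊆ 𝒮 := by
  have hmk : #𝒮 ≤ ℵ₁ := hCH ▸ (mk_le_mk_of_subset fun F hF => And.intro (hclosed F hF)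
    (hdep F hF)).trans mk_isClosed_dependsOn_Iio_le_continuum
  obtain ⟨e⟩ := OmegaOne.nonempty_embedding hmk
  let ℱ (γ : OmegaOne.{u}) : Set (Set (OmegaOne.{u} → Bool)) :=
    (↑) '' {F : 𝒮 | e F ≤ γ ∧ DependsOn (· ∈ F.1) (Iio γ)}
  have hℱ𝒮 (γ) : ℱ γ ⊆ 𝒮 := Subtype.coe_image_subset _ _
  refine ⟨ℱ, ⟨fun γ δ hγδ => ?_, fun γ => ?_, fun γ F hF => hclosed F (hℱ𝒮 γ hF), ?_,
    fun C hCZ hC => ?_⟩, hℱ𝒮⟩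
  · exact image_mono fun F hF => And.intro (hF.1.trans hγδ) (hF.2.mono (Iio_subset_Iio hγδ))
  · have hIic : (Iic γ).Countable := Iio_insert (a := γ) ▸ (OmegaOne.countable_Iio γ).insert γ
    exact ((hIic.preimage e.injective).mono fun F hF => hF.1).image _
  · rintro γ _ ⟨F, hF, rfl⟩
    exact hF.2
  · obtain ⟨F, hF, hCF⟩ := hcap C hCZ hC
    obtain ⟨γ, hγ⟩ := hdep F hF
    exact ⟨max (e ⟨F, hF⟩) γ, F, ⟨⟨F, hF⟩,
      ⟨le_max_left _ _, hγ.mono (Iio_subset_Iio (le_max_right _ _))⟩, rfl⟩, hCF⟩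

theorem ProductivelyQuasiLindelofSp.isAlster (hCH : (𝔠 : Cardinal.{u}) = ℵ₁)
    {Z : Set (OmegaOne.{u} → Bool)} (hZ : ProductivelyQuasiLindelofSp Z) : IsAlster Z := by
  intro 𝒟 hGδ hcap
  let 𝒮 : Set (Set (OmegaOne.{u} → Bool)) :=
    {F | IsClosed F ∧ (∃ γ, DependsOn (· ∈ F) (Iio γ)) ∧ ∃ D ∈ 𝒟, F ⊆ D}
  obtain ⟨ℱ, hℱ, hℱ𝒮⟩ := exists_isCapturingFiltration hCH (Z := Z) (𝒮 := 𝒮) (fun F hF => hF.1)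
    (fun F hF => hF.2.1) fun C hCZ hC => by
      obtain ⟨D, hD, hCD⟩ := hcap C hCZ hC
      obtain ⟨s, hs, hsD⟩ := exists_countable_saturation_subset hC (hGδ D hD) hCD
      obtain ⟨γ, hγ⟩ := OmegaOne.exists_subset_Iio hs
      exact ⟨saturation (Iio γ) C, ⟨isClosed_saturation hC, ⟨γ, dependsOn_saturation⟩, D, hD,
        (saturation_anti hγ).trans hsD⟩, subset_saturation⟩
  obtain ⟨γ, hγ⟩ := hℱ.exists_subset_sUnion hCH hZ
  choose! D hD𝒟 hFD using fun F (hF : F ∈ ℱ γ) => (hℱ𝒮 γ hF).2.2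
  refine ⟨D '' ℱ γ, image_subset_iff.2 hD𝒟, (hℱ.countable γ).image D, fun x hx => ?_⟩
  obtain ⟨F, hF, hxF⟩ := hγ hx
  exact mem_sUnion.2 ⟨D F, mem_image_of_mem D hF, hFD F hF hxF⟩

theorem exists_seq_of_forall_update {α : Type*} {P : ℕ → (ℕ → α) → Prop}
    (hdep : ∀ n, DependsOn (P n) (Iio n)) {f₀ : ℕ → α} (h0 : P 0 f₀)
    (hstep : ∀ n f, P n f → ∃ a, P (n + 1) (Function.update f n a)) : ∃ f, ∀ n, P n f := by
  have : Nonempty α := ⟨f₀ 0⟩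
  choose! a ha using hstep
  let g (n : ℕ) : ℕ → α := Nat.rec f₀ (fun n f => Function.update f n (a n f)) n
  have hg (n) : P n (g n) := Nat.rec h0 (fun n => ha n (g n)) n
  have hgi (i k) : g (i + 1 + k) i = g (i + 1) i := by
    induction k with
    | zero => rfl
    | succ k ih => exact (Function.update_of_ne (by lia) _ _).trans ih
  refine ⟨fun n => g (n + 1) n, fun n => (hdep n fun i (hi : i < n) => ?_).mp (hg n)⟩
  obtain ⟨k, rfl⟩ := Nat.exists_eq_add_of_le (Nat.succ_le_of_lt hi)
  exact hgi i k

section CountablePower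

variable {Y : Type*} [TopologicalSpace Y] {Z : Set Y} {f : Filter (ℕ → Y)} {C : ℕ → Set Y} {n : ℕ}

/-- No choice of `Gδ` sets around `C 0, …, C (n - 1)` yields a cylinder that `f` eventually
avoids. This is the invariant kept while the sets `C n` are chosen one after another. -/
def FrequentlyMemGδ (f : Filter (ℕ → Y)) (n : ℕ) (C : ℕ → Set Y) : Prop :=
  ∀ D : ℕ → Set Y, (∀ i < n, IsGδ (D i)) → (∀ i < n, C i ⊆ D i) →
    ∃ᶠ x in f, ∀ i < n, x i ∈ D i

theorem dependsOn_frequentlyMemGδ : DependsOn (FrequentlyMemGδ f n) (Iio n) := fun C C' h => by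
  have hC (D : ℕ → Set Y) : (∀ i < n, C i ⊆ D i) ↔ ∀ i < n, C' i ⊆ D i :=
    forall₂_congr fun i hi => by rw [h i hi]
  simp only [FrequentlyMemGδ, hC]

theorem IsAlster.exists_frequentlyMemGδ_update [CountableInterFilter f] (hZ : IsAlster Z)
    (hf : ∀ᶠ x in f, x n ∈ Z) (hC : FrequentlyMemGδ f n C) :
    ∃ K, (IsCompact K ∧ K ⊆ Z) ∧ FrequentlyMemGδ f (n + 1) (Function.update C n K) := by
  by_contra! hcon
  have hD (K : Set Y) (hK : IsCompact K ∧ K ⊆ Z) : ∃ D : ℕ → Set Y, (∀ i < n + 1, IsGδ (D i)) ∧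
      (∀ i < n, C i ⊆ D i) ∧ K ⊆ D n ∧ ∀ᶠ x in f, (∀ i < n, x i ∈ D i) → x n ∉ D n := by
    obtain ⟨D, hGδ, hCD, hD⟩ : ∃ D : ℕ → Set Y, (∀ i < n + 1, IsGδ (D i)) ∧
        (∀ i < n + 1, Function.update C n K i ⊆ D i) ∧ ¬∃ᶠ x in f, ∀ i < n + 1, x i ∈ D i := by
      simpa only [FrequentlyMemGδ, not_forall, exists_prop] using hcon K hK
    simp only [Nat.forall_lt_succ_right, Filter.not_frequently, not_and] at hCD hD
    refine ⟨D, hGδ, fun i hi => ?_, ?_, hD⟩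
    · simpa only [Function.update_of_ne hi.ne] using hCD.1 i hi
    · simpa only [Function.update_self] using hCD.2
  choose! D hGδ hCD hKD hfD using hD
  obtain ⟨𝒞, h𝒞, hc, hZ𝒞⟩ := hZ ((fun K => D K n) '' {K | IsCompact K ∧ K ⊆ Z})
    (forall_mem_image.2 fun K hK => hGδ K hK n n.lt_succ_self)
    fun K hKZ hK => ⟨D K n, mem_image_of_mem _ ⟨hK, hKZ⟩, hKD K ⟨hK, hKZ⟩⟩
  choose! K hK hKE using fun E (hE : E ∈ 𝒞) => h𝒞 hE
  have hfreq : ∃ᶠ x in f, ∀ i < n, x i ∈ ⋂ E ∈ 𝒞, D (K E) i := hC (fun i => ⋂ E ∈ 𝒞, D (K E) i)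
    (fun i hi => .biInter hc fun E hE => hGδ _ (hK E hE) i (hi.trans n.lt_succ_self))
    fun i hi => subset_iInter₂ fun E hE => hCD _ (hK E hE) i hi
  have hev : ∀ᶠ x in f, ∀ E ∈ 𝒞, (∀ i < n, x i ∈ D (K E) i) → x n ∉ D (K E) n :=
    (eventually_countable_ball hc).2 fun E hE => hfD _ (hK E hE)
  obtain ⟨x, hx, hxD, hxZ⟩ := (hfreq.and_eventually (hev.and hf)).exists
  obtain ⟨E, hE, hxE⟩ := hZ𝒞 hxZ
  exact hxD E hE (fun i hi => mem_iInter₂.1 (hx i hi) E hE) ((hKE E hE).ge hxE)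

theorem IsAlster.exists_isCompact_forall_frequentlyMemGδ [f.NeBot] [CountableInterFilter f]
    (hZ : IsAlster Z) (hf : f ≤ 𝓟 (Set.univ.pi fun _ => Z)) :
    ∃ C : ℕ → Set Y, (∀ i, IsCompact (C i) ∧ C i ⊆ Z) ∧ ∀ n, FrequentlyMemGδ f n C := by
  let P (n : ℕ) (C : ℕ → Set Y) : Prop :=
    (∀ i < n, IsCompact (C i) ∧ C i ⊆ Z) ∧ FrequentlyMemGδ f n C
  have hdep (n) : DependsOn (P n) (Iio n) := fun C C' h =>
    congr_arg₂ And (propext (forall₂_congr fun i hi => by rw [h i hi]))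
      (dependsOn_frequentlyMemGδ h)
  have h0 : P 0 fun _ => ∅ := ⟨fun i hi => (Nat.not_lt_zero i hi).elim,
    fun D _ _ => .of_forall fun x i hi => (Nat.not_lt_zero i hi).elim⟩
  have hstep (n C) (hC : P n C) : ∃ K, P (n + 1) (Function.update C n K) := by
    have hfn : ∀ᶠ x in f, x n ∈ Z :=
      Filter.mem_of_superset (Filter.le_principal_iff.1 hf) fun x hx => hx n trivial
    obtain ⟨K, hK, hCK⟩ := hZ.exists_frequentlyMemGδ_update hfn hC.2
    refine ⟨K, Nat.forall_lt_succ_right.2 ⟨fun i hi => ?_, ?_⟩, hCK⟩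
    · simpa only [Function.update_of_ne hi.ne] using hC.1 i hi
    · simpa only [Function.update_self] using hK
  obtain ⟨C, hC⟩ := exists_seq_of_forall_update hdep h0 hstep
  exact ⟨C, fun i => (hC (i + 1)).1 i i.lt_succ_self, fun n => (hC n).2⟩

theorem exists_le_nhds_of_le_nhdsSet {K : Set Y} (hK : IsCompact K) {g : Ultrafilter Y}
    (hg : ↑g ≤ 𝓝ˢ K) : ∃ x ∈ K, ↑g ≤ 𝓝 x := by
  by_contra! h
  have hdisj : Disjoint (𝓝ˢ K) g := hK.disjoint_nhdsSet_left.2 fun x hx =>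
    (Ultrafilter.disjoint_iff_not_le.2 (h x hx)).symm
  exact g.neBot.ne (disjoint_self.1 (hdisj.mono_left hg))

theorem IsAlster.isLindelof_pi (hZ : IsAlster Z) : IsLindelof (Set.univ.pi fun _ : ℕ => Z) := by
  intro f _ _ hf
  obtain ⟨C, hC, hfC⟩ := hZ.exists_isCompact_forall_frequentlyMemGδ hf
  have hne : (Filter.pi (fun i => 𝓝ˢ (C i)) ⊓ f).NeBot := by
    refine Filter.inf_neBot_iff_frequently_left.2 fun hp => ?_
    obtain ⟨I, hI, t, ht, htp⟩ := Filter.mem_pi.1 hp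
    choose U hU hCU hUt using fun i => mem_nhdsSet_iff_exists.1 (ht i)
    obtain ⟨n, hn⟩ := hI.bddAbove
    exact (hfC (n + 1) U (fun i _ => (hU i).isGδ) fun i _ => hCU i).mono fun x hx =>
      htp fun i hi => hUt i (hx i (Nat.lt_succ_of_le (hn hi)))
  obtain ⟨g, hg⟩ := Ultrafilter.exists_le (Filter.pi (fun i => 𝓝ˢ (C i)) ⊓ f)
  have hgC (i : ℕ) : ↑(g.map fun x => x i) ≤ 𝓝ˢ (C i) :=
    Filter.tendsto_pi.1 (hg.trans inf_le_left) i
  choose y hyC hgy using fun i => exists_le_nhds_of_le_nhdsSet (hC i).1 (hgC i)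
  have hy : ↑g ≤ 𝓝 y := tendsto_pi_nhds.2 hgy
  exact ⟨y, fun i _ => (hC i).2 (hyC i),
    g.neBot.mono (le_inf hy (hg.trans inf_le_right))⟩

end CountablePower

theorem continuum_eq_aleph_one_of_univ (h : (𝔠 : Cardinal.{v}) = ℵ₁) :
    (𝔠 : Cardinal.{u}) = ℵ₁ := by
  have hlift : lift.{u} (𝔠 : Cardinal.{v}) = ℵ₁ := lift_eq_aleph_one.2 h
  rw [lift_continuum] at hlift
  exact lift_eq_aleph_one.1 ((lift_continuum : lift.{v} (𝔠 : Cardinal.{u}) = 𝔠).trans hlift)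

theorem mk_prod_nat_le_aleph_one {α : Type u} (h : #α ≤ ℵ₁) : #(α × ℕ) ≤ ℵ₁ := by
  rw [mk_prod, lift_uzero, mk_nat, lift_aleph0, ← aleph_mul_aleph0 1]
  exact mul_le_mul_left h ℵ₀

theorem IsBasicOpen.exists_eq_pi {X : Type u} [TopologicalSpace X] {U : Set (ℕ → X)}
    (hU : IsBasicOpen X U) :
    ∃ (s : Set ℕ) (V : ℕ → Set X), s.Finite ∧ (∀ i, IsOpen (V i)) ∧ U = s.pi V := by
  obtain ⟨V, hV, hfin, rfl⟩ := hU
  refine ⟨_, V, hfin, hV, (pi_mono' (fun _ _ => subset_rfl) (subset_univ _)).antisymm ?_⟩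
  intro x hx i _
  by_contra hxi
  exact hxi (hx i fun hi => hxi (hi ▸ mem_univ _))

section UpperHull

variable {X J : Type*} {B : J → Set X}

/-- The upward closure of the image of `X` under the map `X → (J → Bool)` that sends `x` to the
characteristic function of `{j | x ∈ B j}`. It encodes the family `B` in a subset of a cube. -/
def upperHull (B : J → Set X) : Set (J → Bool) :=
  {y | ∃ x, ∀ j, x ∈ B j → y j = true}

theorem isClosed_forall_mem_imp_eq_true [TopologicalSpace X] (hB : ∀ j, IsOpen (B j)) :
    IsClosed {p : X × (J → Bool) | ∀ j, p.1 ∈ B j → p.2 j = true} := by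
  simp only [ofPred_forall]
  exact isClosed_iInter fun j => isClosed_imp ((hB j).preimage continuous_fst)
    (isClosed_eq (by fun_prop) continuous_const)

theorem exists_countable_subcover_of_isLindelof_pi_upperHull {κ : Type*}
    (hL : IsLindelof (Set.univ.pi fun _ : ℕ => upperHull B)) {s : κ → Set ℕ}
    (hs : ∀ k, (s k).Finite) {j : κ → ℕ → J}
    (hcov : ⋃ k, (s k).pi (fun i => B (j k i)) = Set.univ) :
    ∃ t : Set κ, t.Countable ∧ ⋃ k ∈ t, (s k).pi (fun i => B (j k i)) = Set.univ := by
  classical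
  let O (k : κ) : Set (ℕ → J → Bool) := (s k).pi fun i => {y | y (j k i) = true}
  have hO (k) : IsOpen (O k) := isOpen_set_pi (hs k) fun i _ =>
    (isOpen_discrete ({true} : Set Bool)).preimage (continuous_apply (A := fun _ => Bool) (j k i))
  have hOcov : Set.univ.pi (fun _ : ℕ => upperHull B) ⊆ ⋃ k, O k := by
    intro y hy
    choose x hx using fun i => hy i trivial
    obtain ⟨k, hk⟩ := iUnion_eq_univ_iff.1 hcov x
    exact mem_iUnion.2 ⟨k, fun i hi => hx i _ (hk i hi)⟩
  obtain ⟨t, ht, htO⟩ := hL.elim_countable_subcover O hO hOcov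
  refine ⟨t, ht, eq_univ_of_forall fun x => ?_⟩
  have hx : (fun i k => decide (x i ∈ B k)) ∈ Set.univ.pi fun _ : ℕ => upperHull B :=
    fun i _ => ⟨x i, fun _ => decide_eq_true⟩
  obtain ⟨k, hk, hxk⟩ := mem_iUnion₂.1 (htO hx)
  exact mem_biUnion hk fun i hi => of_decide_eq_true (hxk i hi)

end UpperHull

theorem productivelyQuasiLindelofSp_upperHull {X J : Type u} [TopologicalSpace X]
    (hX : ProductivelyQuasiLindelofSp X) {B : J → Set X} (hB : ∀ j, IsOpen (B j)) :
    ProductivelyQuasiLindelofSp (upperHull B) := by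
  have hsnd : Prod.snd '' {p : X × (J → Bool) | ∀ j, p.1 ∈ B j → p.2 j = true} =
      upperHull B := by
    ext y
    simp only [mem_image, Prod.exists, exists_eq_right]
    rfl
  exact hsnd ▸ ((hX.prod_of_compactSpace (J → Bool)).subtype_of_isClosed
    (isClosed_forall_mem_imp_eq_true hB)).image continuous_snd.continuousOn

/-- Under CH, if X is productively quasi-Lindelöf, then every cover
of X^ω of size 𝔠 consisting of basic open sets has a countable subcover. -/
theorem stmt10 (hCH : Cardinal.continuum = Cardinal.aleph 1)
    (X : Type u) [TopologicalSpace X]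
    (hprod : ProductivelyQuasiLindelofSp X)
    (𝒰 : Set (Set (ℕ → X))) (hbasic : ∀ U ∈ 𝒰, IsBasicOpen X U)
    (hsize : #𝒰 ≤ Cardinal.continuum) (hcov : ⋃₀ 𝒰 = Set.univ) :
    ∃ 𝒱 ⊆ 𝒰, 𝒱.Countable ∧ ⋃₀ 𝒱 = Set.univ := by
  have hCH' : (𝔠 : Cardinal.{u}) = ℵ₁ := continuum_eq_aleph_one_of_univ hCH
  choose s V hs hVo hV using fun U : 𝒰 => (hbasic U U.2).exists_eq_pi
  obtain ⟨B, e, hB, hBV⟩ := OmegaOne.exists_reindexing (p := IsOpen)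
    (mk_prod_nat_le_aleph_one (hCH' ▸ hsize)) ⟨Set.univ, isOpen_univ⟩
    fun p : 𝒰 × ℕ => hVo p.1 p.2
  have hU (U : 𝒰) : (s U).pi (fun i => B (e (U, i))) = U := by simp only [hBV, ← hV]
  have hL : IsLindelof (Set.univ.pi fun _ : ℕ => upperHull B) :=
    ((productivelyQuasiLindelofSp_upperHull hprod hB).isAlster hCH').isLindelof_pi
  obtain ⟨t, ht, htcov⟩ := exists_countable_subcover_of_isLindelof_pi_upperHull hL hs
    (j := fun U i => e (U, i)) (by simpa only [hU, ← sUnion_eq_iUnion] using hcov)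
  refine ⟨(↑) '' t, Subtype.coe_image_subset _ _, ht.image _, ?_⟩
  simpa only [hU, sUnion_image] using htcov
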